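/- arXiv:1902.07871 — 2 statements merged into one kernel-verified Lean document; each statement's English description precedes it below -/
import Mathlib

section
/- Let (S_r) be a strong Solovay test and let μ be a Borel probability measure on 2^ℕ such that for some rational δ > 0 one has μ(S_r) ≥ δ for infinitely many r. Then there is a computable function f : ℕ → ℕ with Σ_n 2^{−f(n)} < ∞ and a constant c such that C(μ↾n ∣ n) ≤ n − δ·f(n) + c for infinitely many n. -/
open MeasureTheory Filter

/-- Cantor space: the space of infinite binary sequences. -/
abbrev Cantor : Type := ℕ → Bool

/-- Finite binary strings. -/
abbrev BStr : Type := List Bool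

/-- The cylinder set of sequences extending the string `x`. -/
def cyl (x : BStr) : Set Cantor := {Z | ∀ i : Fin x.length, Z i.1 = x.get i}

/-- The string of the first `n` bits of `Z`. -/
def seg (Z : Cantor) (n : ℕ) : BStr := List.ofFn fun i : Fin n => Z i.1

/-- `lam` is the uniform (fair-coin product) measure: every cylinder `[x]`
has measure `2^{-|x|}`. -/
def IsUniform (lam : Measure Cantor) : Prop :=
  ∀ x : BStr, lam (cyl x) = (2 : ENNReal)⁻¹ ^ x.length

/-- `(G_m)` is a Martin-Löf test with respect to the measure `ρ`:
the sets `G_m` are uniformly effectively open and `ρ (G_m) ≤ 2^{-m}`. -/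
def IsMLTest (ρ : Measure Cantor) (G : ℕ → Set Cantor) : Prop :=
  (∃ σ : ℕ → ℕ → BStr, Computable₂ σ ∧ ∀ m, G m = ⋃ i, cyl (σ m i)) ∧
  ∀ m, ρ (G m) ≤ (2 : ENNReal)⁻¹ ^ m

/-- `μ` is Martin-Löf absolutely continuous in `ρ`: `inf_m μ(G_m) = 0`
for every `ρ`-Martin-Löf test `(G_m)`. -/
def MLAC (μ ρ : Measure Cantor) : Prop :=
  ∀ G : ℕ → Set Cantor, IsMLTest ρ G → ⨅ m, μ (G m) = 0

/-- `Z` is Martin-Löf random with respect to `lam`. -/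
def MLRandom (lam : Measure Cantor) (Z : Cantor) : Prop :=
  ∀ G : ℕ → Set Cantor, IsMLTest lam G → Z ∉ ⋂ m, G m

/-- `ρ` is a computable measure: `ρ [x]` is a computable real, uniformly in `x`. -/
def ComputableMeasure (ρ : Measure Cantor) : Prop :=
  ∃ q : BStr → ℕ → ℚ, Computable₂ q ∧
    ∀ x k, |(q x k : ℝ) - (ρ (cyl x)).toReal| ≤ (2 : ℝ)⁻¹ ^ k

/-- `U` is a universal plain machine. -/
def UniversalPlain (U : BStr →. BStr) : Prop :=
  Partrec U ∧ ∀ M : BStr →. BStr, Partrec M →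
    ∃ c : ℕ, ∀ p x, x ∈ M p → ∃ q : BStr, q.length ≤ p.length + c ∧ x ∈ U q

/-- The domain of `M` is an antichain under the prefix relation. -/
def PrefixFreeDom (M : BStr →. BStr) : Prop :=
  ∀ p q : BStr, (M p).Dom → (M q).Dom → p <+: q → p = q

/-- `U` is a universal prefix-free machine. -/
def UniversalPrefixFree (U : BStr →. BStr) : Prop :=
  Partrec U ∧ PrefixFreeDom U ∧
  ∀ M : BStr →. BStr, Partrec M → PrefixFreeDom M →
    ∃ c : ℕ, ∀ p x, x ∈ M p → ∃ q : BStr, q.length ≤ p.length + c ∧ x ∈ U q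

/-- Kolmogorov complexity of the string `x` with respect to the machine `U`:
the minimal length of a `U`-description of `x`. -/
noncomputable def cpx (U : BStr →. BStr) (x : BStr) : ℕ :=
  sInf {n | ∃ q : BStr, q.length = n ∧ x ∈ U q}

/-- A natural number `n` identified with the string `0^n`. -/
def numStr (n : ℕ) : BStr := List.replicate n false

/-- Complexity of the natural number `n` (i.e., of the string `0^n`). -/
noncomputable def cpxN (U : BStr →. BStr) (n : ℕ) : ℕ := cpx U (numStr n)

/-- The `μ`-average complexity of the strings of length `n`:
`Σ_{|x|=n} cpx(x) · μ[x]`. -/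
noncomputable def avgCpx (U : BStr →. BStr) (μ : Measure Cantor) (n : ℕ) : ℝ :=
  ∑ v : Fin n → Bool, (cpx U (List.ofFn v) : ℝ) * (μ (cyl (List.ofFn v))).toReal

/-- A measure `μ` is trivial for the complexity given by the machine `U`
(e.g. K-trivial when `U` is the universal prefix-free machine, C-trivial
when `U` is the universal plain machine). -/
def MeasTrivial (U : BStr →. BStr) (μ : Measure Cantor) : Prop :=
  ∃ c : ℝ, ∀ n : ℕ, avgCpx U μ n ≤ (cpxN U n : ℝ) + c

/-- A universal plain machine with an auxiliary (conditioning) input;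
natural-number conditions are identified with unary strings and pairs
are encoded by the computable pairing `Nat.pair`. -/
def UniversalPlainCond (U : BStr → ℕ →. BStr) : Prop :=
  Partrec₂ U ∧ ∀ M : BStr → ℕ →. BStr, Partrec₂ M →
    ∃ c : ℕ, ∀ p y x, x ∈ M p y → ∃ q : BStr, q.length ≤ p.length + c ∧ x ∈ U q y

/-- For every condition `y`, the domain of `M (·) y` is an antichain under
the prefix relation. -/
def PrefixFreeDomCond (M : BStr → ℕ →. BStr) : Prop :=
  ∀ (y : ℕ) (p q : BStr), (M p y).Dom → (M q y).Dom → p <+: q → p = q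

/-- A universal prefix-free machine with an auxiliary (conditioning) input. -/
def UniversalPrefixFreeCond (U : BStr → ℕ →. BStr) : Prop :=
  Partrec₂ U ∧ PrefixFreeDomCond U ∧
  ∀ M : BStr → ℕ →. BStr, Partrec₂ M → PrefixFreeDomCond M →
    ∃ c : ℕ, ∀ p y x, x ∈ M p y → ∃ q : BStr, q.length ≤ p.length + c ∧ x ∈ U q y

/-- Conditional Kolmogorov complexity of `x` given `y`, with respect to the
machine `U` with auxiliary input. -/
noncomputable def cpxCond (U : BStr → ℕ →. BStr) (x : BStr) (y : ℕ) : ℕ :=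
  sInf {n | ∃ q : BStr, q.length = n ∧ x ∈ U q y}

/-- A strong Solovay test: a sequence of clopen sets `S_r`, given uniformly
computably as finite unions of cylinders, with `Σ_r λ(S_r) < ∞`. -/
def StrongSolovayTest (lam : Measure Cantor) (S : ℕ → Set Cantor) : Prop :=
  (∃ X : ℕ → List BStr, Computable X ∧ ∀ r, S r = ⋃ x ∈ X r, cyl x) ∧
  (∑' r, lam (S r)) ≠ ⊤

/-- The `μ`-average conditional complexity `C(μ↾n ∣ n) = Σ_{|x|=n} C(x∣n)·μ[x]`. -/
noncomputable def avgCpxCond (Uc : BStr → ℕ →. BStr) (μ : Measure Cantor) (n : ℕ) : ℝ :=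
  ∑ v : Fin n → Bool, (cpxCond Uc (List.ofFn v) n : ℝ) * (μ (cyl (List.ofFn v))).toReal

/-! ### Helpers -/

lemma mem_cyl_iff (x : BStr) (Z : Cantor) : Z ∈ cyl x ↔ seg Z x.length = x := by
  unfold cyl seg
  constructor
  · intro h
    apply List.ext_getElem
    · simp
    · intro i h1 h2
      simpa using h ⟨i, h2⟩
  · intro h i
    have h1 : (List.ofFn fun i : Fin x.length => Z i.1)[i.1]'(by simp) = Z i.1 := by simp
    simp only [List.get_eq_getElem]
    rw [← h1]
    congr 1

lemma mem_cyl_ofFn {n : ℕ} (v : Fin n → Bool) (Z : Cantor) :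
    Z ∈ cyl (List.ofFn v) ↔ (fun i : Fin n => Z i.1) = v := by
  rw [mem_cyl_iff, List.length_ofFn]
  unfold seg
  exact List.ofFn_injective.eq_iff

lemma seg_take (Z : Cantor) {k n : ℕ} (h : k ≤ n) : (seg Z n).take k = seg Z k := by
  unfold seg
  apply List.ext_getElem
  · simpa using h
  · intro i h1 h2
    simp

lemma measurableSet_cyl (x : BStr) : MeasurableSet (cyl x) := by
  have : cyl x = ⋂ i : Fin x.length, (fun Z : Cantor => Z i.1) ⁻¹' {x.get i} := by
    ext Z; simp [cyl]
  rw [this]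
  exact MeasurableSet.iInter fun i => (measurable_pi_apply i.1) (measurableSet_singleton _)

lemma measure_seg_mem (ν : Measure Cantor) {n : ℕ} (A : Finset (Fin n → Bool)) :
    ν {Z | (fun i : Fin n => Z i.1) ∈ A} = ∑ v ∈ A, ν (cyl (List.ofFn v)) := by
  rw [← measure_biUnion_finset]
  · congr 1
    ext Z
    simp [mem_cyl_ofFn]
  · intro v _ w _ hvw
    refine Set.disjoint_left.2 fun Z hv hw => hvw ?_
    rw [mem_cyl_ofFn] at hv hw
    exact hv.symm.trans hw
  · intro v _
    exact measurableSet_cyl _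

/-- All strings of length `n`. -/
def allStr (n : ℕ) : List BStr :=
  Nat.rec [[]] (fun _ l => l.map (List.cons false) ++ l.map (List.cons true)) n

lemma allStr_succ (n : ℕ) : allStr (n + 1) =
    (allStr n).map (List.cons false) ++ (allStr n).map (List.cons true) := rfl

lemma mem_allStr (n : ℕ) (x : BStr) : x ∈ allStr n ↔ x.length = n := by
  induction n generalizing x with
  | zero => simp [allStr]
  | succ n ih =>
    rw [allStr_succ]
    cases x with
    | nil => simp
    | cons b x => cases b <;> simp [ih]

lemma nodup_allStr (n : ℕ) : (allStr n).Nodup := by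
  induction n with
  | zero => simp [allStr]
  | succ n ih =>
    rw [allStr_succ]
    refine List.Nodup.append (ih.map (List.cons_injective)) (ih.map (List.cons_injective)) ?_
    intro x h1 h2
    simp only [List.mem_map] at h1 h2
    obtain ⟨a, _, rfl⟩ := h1
    obtain ⟨b, _, h⟩ := h2
    simp at h

lemma length_allStr (n : ℕ) : (allStr n).length = 2 ^ n := by
  induction n with
  | zero => simp [allStr]
  | succ n ih => rw [allStr_succ]; simp [ih, pow_succ]; ring

lemma primrec_allStr : Primrec allStr := by
  refine Primrec.nat_rec₁ _ ?_
  have h (b : Bool) : Primrec fun p : ℕ × List BStr => p.2.map (List.cons b) :=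
    Primrec.list_map Primrec.snd (Primrec.list_cons.comp₂ (Primrec₂.const b) Primrec₂.right)
  exact Primrec.list_append.comp (h false) (h true)

/-- Binary value of a string (least significant bit first). -/
def bval (p : BStr) : ℕ := p.foldr (fun b a => (cond b 1 0) + (a + a)) 0

lemma primrec_bval : Primrec bval := by
  refine Primrec.list_foldr (α := BStr) (β := Bool) (σ := ℕ)
    (h := fun _ p => (cond p.1 1 0) + (p.2 + p.2)) Primrec.id (Primrec.const 0) ?_
  refine Primrec.nat_add.comp₂ ?_ ?_
  · exact Primrec.cond (Primrec.fst.comp Primrec.snd) (Primrec.const 1) (Primrec.const 0)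
  · exact Primrec.nat_add.comp (Primrec.snd.comp Primrec.snd) (Primrec.snd.comp Primrec.snd)

lemma exists_bval (k i : ℕ) (h : i < 2 ^ k) : ∃ p : BStr, p.length = k ∧ bval p = i := by
  induction k generalizing i with
  | zero => exact ⟨[], rfl, by simp at h; simp [bval, h]⟩
  | succ k ih =>
    obtain ⟨p, hp, hv⟩ := ih (i / 2) (by rw [pow_succ] at h; omega)
    refine ⟨decide (i % 2 = 1) :: p, by simp [hp], ?_⟩
    have : bval (decide (i % 2 = 1) :: p) = cond (decide (i % 2 = 1)) 1 0 + (bval p + bval p) := rfl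
    rw [this, hv]
    by_cases h2 : i % 2 = 1
    · simp [h2]; omega
    · simp [h2]; omega

/-- `y` has a prefix in `X`. -/
def HasPre (y : BStr) (X : List BStr) : Prop := ∃ x ∈ X, y.take x.length = x

instance : DecidableRel HasPre := fun y X => by unfold HasPre; infer_instance

lemma primrec_hasPre : PrimrecRel HasPre := by
  have h : PrimrecRel fun (x y : BStr) => y.take x.length = x :=
    Primrec.eq.comp ((Primrec.list_take (α := Bool)).comp
      ((Primrec.list_length (α := Bool)).comp Primrec.fst) Primrec.snd)
      Primrec.fst
  exact (PrimrecRel.exists_mem_list h).swap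

/-- Strings of length `n` with a prefix in `X`, provided `n` codes a pair whose second component
is the total length of `X`. -/
def LF (n : ℕ) (X : List BStr) : List BStr :=
  if X.flatten.length = n.unpair.2 then (allStr n).filter (fun y => HasPre y X) else []

lemma primrec_LF : Primrec₂ LF := by
  refine Primrec.ite ?_ ?_ (Primrec.const [])
  · exact Primrec.eq.comp ((Primrec.list_length (α := Bool)).comp
        (Primrec.list_flatten.comp Primrec.snd))
      (Primrec.snd.comp (Primrec.unpair.comp Primrec.fst))
  · exact (primrec_hasPre.listFilter).comp (primrec_allStr.comp Primrec.fst) Primrec.snd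

lemma length_of_mem_LF {n : ℕ} {X : List BStr} {x : BStr} (h : x ∈ LF n X) : x.length = n := by
  unfold LF at h
  split_ifs at h with h1
  · exact (mem_allStr _ _).1 (List.mem_filter.1 h).1
  · simp at h

lemma nodup_LF (n : ℕ) (X : List BStr) : (LF n X).Nodup := by
  unfold LF
  split_ifs
  · exact (nodup_allStr n).filter _
  · simp

lemma length_LF_le (n : ℕ) (X : List BStr) : (LF n X).length ≤ 2 ^ n := by
  unfold LF
  split_ifs
  · rw [← length_allStr]; exact List.length_filter_le _ _
  · simp

/-- The saving. -/
def FF (n N : ℕ) : ℕ := Nat.findGreatest (fun k => N * 2 ^ k ≤ 2 ^ n) n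

lemma primrec_two_pow : Primrec (fun n : ℕ => 2 ^ n) := by
  have : Primrec (fun n : ℕ => (Nat.rec 1 (fun _ a => a + a) n : ℕ)) :=
    Primrec.nat_rec₁ 1 (Primrec.nat_add.comp Primrec.snd Primrec.snd)
  refine this.of_eq fun n => ?_
  induction n with
  | zero => rfl
  | succ n ih => simp only [ih, pow_succ]; ring

lemma primrec_FF : Primrec₂ FF := by
  refine Primrec.nat_findGreatest Primrec.fst ?_
  exact Primrec.nat_le.comp
    (Primrec.nat_mul.comp (Primrec.snd.comp Primrec.fst) (primrec_two_pow.comp Primrec.snd))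
    (primrec_two_pow.comp (Primrec.fst.comp Primrec.fst))

lemma FF_le (n N : ℕ) : FF n N ≤ n := Nat.findGreatest_le n

lemma FF_spec {n N : ℕ} (h : N ≤ 2 ^ n) : N ≤ 2 ^ (n - FF n N) := by
  have h1 : N * 2 ^ FF n N ≤ 2 ^ n :=
    Nat.findGreatest_spec (P := fun k => N * 2 ^ k ≤ 2 ^ n) (Nat.zero_le n) (by simpa using h)
  have h2 : 2 ^ n = 2 ^ (n - FF n N) * 2 ^ FF n N := by
    rw [← pow_add, Nat.sub_add_cancel (FF_le n N)]
  rw [h2] at h1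
  exact Nat.le_of_mul_le_mul_right h1 (by positivity)

lemma FF_bound (n N : ℕ) :
    ((2 : ℝ) ^ FF n N)⁻¹ ≤ 2 * ((N : ℝ) * (2⁻¹ : ℝ) ^ n) + (2⁻¹ : ℝ) ^ n := by
  rcases (FF_le n N).eq_or_lt with h | h
  · rw [h, inv_pow]
    have : (0 : ℝ) ≤ 2 * ((N : ℝ) * ((2 : ℝ) ^ n)⁻¹) := by positivity
    linarith
  · have h1 : ¬ (N * 2 ^ (FF n N + 1) ≤ 2 ^ n) :=
      Nat.findGreatest_is_greatest (P := fun k => N * 2 ^ k ≤ 2 ^ n) (Nat.lt_succ_self _) h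
    have h2 : (2 : ℝ) ^ n ≤ N * 2 ^ (FF n N + 1) := by
      have := (not_le.1 h1).le
      exact_mod_cast this
    have h3 : ((2 : ℝ) ^ FF n N)⁻¹ ≤ 2 * ((N : ℝ) * (2⁻¹ : ℝ) ^ n) := by
      rw [inv_pow, inv_le_iff_one_le_mul₀ (by positivity)]
      rw [show 2 * ((N : ℝ) * ((2 : ℝ) ^ n)⁻¹) * 2 ^ FF n N
        = (N * 2 ^ (FF n N + 1)) / 2 ^ n by rw [pow_succ]; field_simp]
      rw [one_le_div (by positivity)]
      exact h2
    have : (0 : ℝ) ≤ (2⁻¹ : ℝ) ^ n := by positivity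
    linarith

/-- The finset version of `LF`. -/
def AF (n : ℕ) (X : List BStr) : Finset (Fin n → Bool) :=
  Finset.univ.filter fun v => List.ofFn v ∈ LF n X

lemma card_AF (n : ℕ) (X : List BStr) : (AF n X).card = (LF n X).length := by
  rw [← List.toFinset_card_of_nodup (nodup_LF n X)]
  rw [← Finset.card_image_of_injective (AF n X) (List.ofFn_injective (n := n) (α := Bool))]
  congr 1
  ext x
  simp only [AF, Finset.mem_image, Finset.mem_filter, Finset.mem_univ, true_and, List.mem_toFinset]
  constructor
  · rintro ⟨v, hv, rfl⟩; exact hv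
  · intro hx
    have := length_of_mem_LF hx
    subst this
    exact ⟨x.get, by simpa using hx, by simp⟩

lemma length_le_flatten {X : List BStr} {x : BStr} (h : x ∈ X) : x.length ≤ X.flatten.length := by
  rw [List.length_flatten]
  exact List.le_sum_of_mem (List.mem_map_of_mem h)

lemma set_eq_AF (X : List BStr) (n r : ℕ) (hn : n = Nat.pair r X.flatten.length) :
    (⋃ x ∈ X, cyl x) = {Z : Cantor | (fun i : Fin n => Z i.1) ∈ AF n X} := by
  ext Z
  have hif : X.flatten.length = n.unpair.2 := by rw [hn, Nat.unpair_pair]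
  have hle : X.flatten.length ≤ n := by rw [hn]; exact Nat.right_le_pair _ _
  have hs : List.ofFn (fun i : Fin n => Z i.1) = seg Z n := rfl
  have hl : (seg Z n).length = n := by simp [seg]
  simp only [Set.mem_iUnion, Set.mem_ofPred_eq, AF, Finset.mem_filter, Finset.mem_univ, true_and,
    LF, if_pos hif, List.mem_filter, mem_allStr, decide_eq_true_eq, hs, hl, HasPre, mem_cyl_iff,
    exists_prop]
  refine exists_congr fun x => and_congr_right fun hx => ?_
  rw [seg_take Z ((length_le_flatten hx).trans hle)]

/-- if `μ` fails a strong Solovay test `(S_r)` at a rational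
level `δ > 0` (i.e. `μ(S_r) ≥ δ` for infinitely many `r`), then there are a
computable `f` with `Σ_n 2^{-f(n)} < ∞` and a constant `c` such that
`C(μ↾n ∣ n) ≤ n - δ·f(n) + c` for infinitely many `n`. -/
theorem failing_strong_solovay_test_gives_complexity_dips
    (Uc : BStr → ℕ →. BStr) (hUc : UniversalPlainCond Uc)
    (lam : Measure Cantor) (hlam : IsUniform lam)
    (S : ℕ → Set Cantor) (hS : StrongSolovayTest lam S)
    (μ : Measure Cantor) [IsProbabilityMeasure μ]
    (δ : ℚ) (hδ : 0 < δ)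
    (hfail : ∀ m : ℕ, ∃ r ≥ m, ENNReal.ofReal (δ : ℝ) ≤ μ (S r)) :
    ∃ f : ℕ → ℕ, Computable f ∧ Summable (fun n => ((2 : ℝ) ^ f n)⁻¹) ∧
      ∃ c : ℝ, ∀ m : ℕ, ∃ n ≥ m,
        avgCpxCond Uc μ n ≤ (n : ℝ) - (δ : ℝ) * (f n : ℝ) + c := by
  obtain ⟨⟨X, hX, hSX⟩, hsum⟩ := hS
  -- basic objects
  let L : ℕ → List BStr := fun n => LF n (X n.unpair.1)
  have hL : Computable L :=
    primrec_LF.to_comp.comp Computable.id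
      (hX.comp (Primrec.fst.comp Primrec.unpair).to_comp)
  let e : ℕ → ℕ := fun r => Nat.pair r (X r).flatten.length
  have he : Function.Injective e := fun a b h => (Nat.pair_eq_pair.1 h).1
  have hLe : ∀ r, L (e r) = LF (e r) (X r) := fun r => by simp [L, e]
  have hSe : ∀ r, S r = {Z : Cantor | (fun i : Fin (e r) => Z i.1) ∈ AF (e r) (X r)} := fun r =>
    (hSX r).trans (set_eq_AF (X r) (e r) r rfl)
  let f : ℕ → ℕ := fun n => FF n (L n).length
  have hf : Computable f :=
    primrec_FF.to_comp.comp Computable.id (Computable.list_length.comp hL)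
  refine ⟨f, hf, ?_, ?_⟩
  · -- summability
    let h : ℕ → ENNReal := fun n => ((L n).length : ENNReal) * (2 : ENNReal)⁻¹ ^ n
    have hhe : ∀ r, h (e r) = lam (S r) := by
      intro r
      rw [hSe r, measure_seg_mem]
      simp only [h, hLe, hlam _, List.length_ofFn, Finset.sum_const, card_AF, nsmul_eq_mul]
    have hsupp : Function.support h ⊆ Set.range e := by
      intro n hn
      by_contra hne
      apply hn
      have : ¬ (X n.unpair.1).flatten.length = n.unpair.2 := by
        intro hc
        exact hne ⟨n.unpair.1, by simp only [e]; rw [hc, Nat.pair_unpair]⟩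
      simp only [h, L, LF, if_neg this, List.length_nil, Nat.cast_zero, zero_mul]
    have hts : ∑' n, h n ≠ ⊤ := by
      rw [← he.tsum_eq hsupp]
      simpa only [hhe] using hsum
    have hsm : Summable fun n => ((L n).length : ℝ) * (2⁻¹ : ℝ) ^ n := by
      have := ENNReal.summable_toReal hts
      simpa [h] using this
    refine Summable.of_nonneg_of_le (fun n => by positivity)
      (fun n => FF_bound n (L n).length) ?_
    exact (hsm.mul_left 2).add (summable_geometric_of_lt_one (by norm_num) (by norm_num))
  · -- complexity
    obtain ⟨c₁, hc₁⟩ := hUc.2 (fun p n => (((L n)[bval p]? : Option BStr) : Part BStr)) (by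
      refine Computable.ofOption ?_
      exact Computable.list_getElem?.comp (hL.comp Computable.snd)
        (primrec_bval.to_comp.comp Computable.fst))
    obtain ⟨c₂, hc₂⟩ := hUc.2 (fun p _ => Part.some p) (by
      exact Computable.fst)
    refine ⟨((c₁ + c₂ : ℕ) : ℝ), fun m => ?_⟩
    obtain ⟨r, hr, hδr⟩ := hfail m
    refine ⟨e r, hr.trans (Nat.left_le_pair _ _), ?_⟩
    set n := e r with hn
    have hB : ∀ v : Fin n → Bool, cpxCond Uc (List.ofFn v) n ≤ n + (c₁ + c₂) := by
      intro v
      obtain ⟨q, hq, hq'⟩ := hc₂ (List.ofFn v) n (List.ofFn v) (Part.mem_some _)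
      have : cpxCond Uc (List.ofFn v) n ≤ q.length := Nat.sInf_le ⟨q, rfl, hq'⟩
      rw [List.length_ofFn] at hq
      omega
    have hfn : f n ≤ n := FF_le _ _
    have hA : ∀ v ∈ AF n (X r), cpxCond Uc (List.ofFn v) n + f n ≤ n + (c₁ + c₂) := by
      intro v hv
      have hv' : List.ofFn v ∈ L n := by
        rw [hLe]; exact (Finset.mem_filter.1 hv).2
      obtain ⟨i, hi, hiv⟩ := List.getElem_of_mem hv'
      have hlen : (L n).length ≤ 2 ^ (n - f n) := FF_spec (length_LF_le _ _)
      obtain ⟨p, hp, hpi⟩ := exists_bval (n - f n) i (hi.trans_le hlen)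
      obtain ⟨q, hq, hq'⟩ := hc₁ p n (List.ofFn v) (by
        simp only [Part.mem_ofOption, Option.mem_def]
        rw [hpi, List.getElem?_eq_getElem hi, hiv])
      have : cpxCond Uc (List.ofFn v) n ≤ q.length := Nat.sInf_le ⟨q, rfl, hq'⟩
      omega
    have htot : ∑ v : Fin n → Bool, (μ (cyl (List.ofFn v))).toReal = 1 := by
      rw [← ENNReal.toReal_sum (fun _ _ => measure_ne_top _ _), ← measure_seg_mem]
      simp
    have hmA : (δ : ℝ) ≤ ∑ v ∈ AF n (X r), (μ (cyl (List.ofFn v))).toReal := by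
      rw [← ENNReal.toReal_sum (fun _ _ => measure_ne_top _ _), ← measure_seg_mem, ← hSe r]
      exact (ENNReal.ofReal_le_iff_le_toReal (measure_ne_top _ _)).1 hδr
    have hpt : ∀ v : Fin n → Bool,
        (cpxCond Uc (List.ofFn v) n : ℝ) * (μ (cyl (List.ofFn v))).toReal ≤
        ((n : ℝ) + ((c₁ + c₂ : ℕ) : ℝ)) * (μ (cyl (List.ofFn v))).toReal -
          (if v ∈ AF n (X r) then (f n : ℝ) * (μ (cyl (List.ofFn v))).toReal else 0) := by
      intro v
      have h0 : 0 ≤ (μ (cyl (List.ofFn v))).toReal := ENNReal.toReal_nonneg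
      split_ifs with hv
      · have : (cpxCond Uc (List.ofFn v) n : ℝ) + f n ≤ n + ((c₁ + c₂ : ℕ) : ℝ) := by
          exact_mod_cast hA v hv
        nlinarith
      · have : (cpxCond Uc (List.ofFn v) n : ℝ) ≤ n + ((c₁ + c₂ : ℕ) : ℝ) := by
          exact_mod_cast hB v
        nlinarith
    have hfin := Finset.sum_le_sum (s := Finset.univ) fun v _ => hpt v
    rw [Finset.sum_sub_distrib, ← Finset.mul_sum, htot, Finset.sum_ite_mem, Finset.univ_inter,
      ← Finset.mul_sum] at hfin
    unfold avgCpxCond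
    have h0 : (0 : ℝ) ≤ f n := Nat.cast_nonneg _
    nlinarith [mul_le_mul_of_nonneg_left hmA h0]
end

section
/- Let μ be a Borel probability measure on 2^ℕ and suppose there exist p ∈ ℕ and infinitely many n with K(μ↾n) ≤ K(n) + p. Then μ is supported on its set of atoms, i.e., μ({Z ∈ 2^ℕ : μ({Z}) > 0}) = 1. In particular, every K-trivial measure is supported on its atoms. -/
open MeasureTheory Filter

theorem enum_dom (U : BStr →. BStr) (hU : Partrec U) :
    ∃ e : ℕ → Option (BStr × BStr), Primrec e ∧
      (∀ s q x, e s = some (q, x) → x ∈ U q) ∧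
      (∀ q x, x ∈ U q → ∃ s, e s = some (q, x)) ∧
      (∀ s s' q x x', e s = some (q, x) → e s' = some (q, x') → s = s') := by
  obtain ⟨c, hc⟩ := Nat.Partrec.Code.exists_code.1 hU
  have hev : ∀ q x, x ∈ U q ↔ Encodable.encode x ∈ c.eval (Encodable.encode q) := by
    intro q x
    rw [hc]
    simp
  let e : ℕ → Option (BStr × BStr) := fun s =>
    (Nat.Partrec.Code.evaln (s.unpair.1 + 1) c s.unpair.2).bind fun y =>
      if (Nat.Partrec.Code.evaln s.unpair.1 c s.unpair.2).isSome = true then none else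
        (Encodable.decode (α := BStr) s.unpair.2).bind fun q =>
          if Encodable.encode q = s.unpair.2 then
            (Encodable.decode (α := BStr) y).map fun x => (q, x) else none
  have he : ∀ s q x, e s = some (q, x) → s.unpair.2 = Encodable.encode q ∧
      Nat.Partrec.Code.evaln (s.unpair.1 + 1) c s.unpair.2 = some (Encodable.encode x) ∧
      Nat.Partrec.Code.evaln s.unpair.1 c s.unpair.2 = none := by
    intro s q x h
    simp only [e, Option.bind_eq_some_iff] at h
    obtain ⟨y, hy, h⟩ := h
    split_ifs at h with h1
    simp only [Option.bind_eq_some_iff] at h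
    obtain ⟨q', hq', h⟩ := h
    split_ifs at h with h2
    simp only [Option.map_eq_some_iff, Prod.mk.injEq] at h
    obtain ⟨x', hx', rfl, rfl⟩ := h
    refine ⟨h2.symm, ?_, by simpa using h1⟩
    rw [hy]
    congr 1
    have hs := Nat.Partrec.Code.evaln_sound (Option.mem_def.2 hy)
    rw [hc, ← h2] at hs
    simp only [Encodable.encodek, Part.coe_some, Part.bind_some, Part.mem_map_iff] at hs
    obtain ⟨x'', -, rfl⟩ := hs
    rw [Encodable.encodek] at hx'
    simpa using hx'
  refine ⟨e, ?_, ?_, ?_, ?_⟩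
  · have hl : Primrec fun s : ℕ => s.unpair.1 := Primrec.fst.comp Primrec.unpair
    have hr : Primrec fun s : ℕ => s.unpair.2 := Primrec.snd.comp Primrec.unpair
    have h1 : Primrec fun s : ℕ => Nat.Partrec.Code.evaln (s.unpair.1 + 1) c s.unpair.2 :=
      Nat.Partrec.Code.primrec_evaln.comp
        (((Primrec.succ.comp hl).pair (Primrec.const c)).pair hr)
    have h2 : Primrec fun s : ℕ => Nat.Partrec.Code.evaln s.unpair.1 c s.unpair.2 :=
      Nat.Partrec.Code.primrec_evaln.comp ((hl.pair (Primrec.const c)).pair hr)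
    refine Primrec.option_bind h1 ?_
    refine Primrec.ite (Primrec.eq.comp (Primrec.option_isSome.comp (h2.comp Primrec.fst))
      (Primrec.const true)) (Primrec.const none) ?_
    refine Primrec.option_bind (Primrec.decode.comp (hr.comp Primrec.fst)) ?_
    refine Primrec.ite (Primrec.eq.comp (Primrec.encode.comp Primrec.snd)
      (hr.comp (Primrec.fst.comp Primrec.fst))) ?_ (Primrec.const none)
    refine Primrec.option_map (Primrec.decode.comp (Primrec.snd.comp Primrec.fst)) ?_
    exact Primrec.pair (Primrec.snd.comp Primrec.fst) Primrec.snd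
  · intro s q x h
    obtain ⟨h1, h2, h3⟩ := he s q x h
    rw [hev, ← h1]
    exact Nat.Partrec.Code.evaln_sound h2
  · intro q x h
    rw [hev, Nat.Partrec.Code.evaln_complete] at h
    classical
    have hk := Nat.find_spec h
    rcases hn : Nat.find h with _ | k
    · rw [hn] at hk
      simp [Nat.Partrec.Code.evaln] at hk
    · have hmin := Nat.find_min h (m := k) (by omega)
      rw [hn] at hk
      refine ⟨Nat.pair k (Encodable.encode q), ?_⟩
      have hk' : Nat.Partrec.Code.evaln (k + 1) c (Encodable.encode q) =
        some (Encodable.encode x) := hk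
      have hno : Nat.Partrec.Code.evaln k c (Encodable.encode q) = none := by
        rw [Option.eq_none_iff_forall_not_mem]
        intro z hz
        have hz' := Nat.Partrec.Code.evaln_mono (Nat.le_succ k) hz
        have : z = Encodable.encode x := by
          have := hz'.symm.trans hk'
          simpa using this
        exact hmin (this ▸ hz)
      simp [e, hk', hno]
  · intro s s' q x x' h h'
    obtain ⟨h1, h2, h3⟩ := he s q x h
    obtain ⟨h1', h2', h3'⟩ := he s' q x' h'
    have key : ∀ a b : ℕ, ∀ z, Nat.Partrec.Code.evaln (a + 1) c (Encodable.encode q) = some z →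
        Nat.Partrec.Code.evaln b c (Encodable.encode q) = none → b ≤ a := by
      intro a b z hz hn
      by_contra hlt
      have := Nat.Partrec.Code.evaln_mono (show a + 1 ≤ b by omega) (Option.mem_def.2 hz)
      rw [hn] at this
      simp at this
    rw [h1] at h2 h3
    rw [h1'] at h2' h3'
    have a1 := key _ _ _ h2 h3'
    have a2 := key _ _ _ h2' h3
    rw [← Nat.pair_unpair s, ← Nat.pair_unpair s', h1, h1']
    congr 1
    omega

/-- Value of a binary string, most significant bit first. -/
def sval (q : BStr) : ℕ := q.foldl (fun a b => 2 * a + cond b 1 0) 0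

theorem sval_concat (q : BStr) (b : Bool) : sval (q ++ [b]) = 2 * sval q + cond b 1 0 := by
  simp [sval]

theorem sval_append (q t : BStr) :
    sval q * 2 ^ t.length ≤ sval (q ++ t) ∧
      sval (q ++ t) + 1 ≤ (sval q + 1) * 2 ^ t.length := by
  induction t using List.reverseRecOn with
  | nil => simp
  | append_singleton t b ih =>
    rw [← List.append_assoc, sval_concat, List.length_append]
    simp only [List.length_cons, List.length_nil, zero_add, pow_succ]
    cases b <;> simp only [cond_true, cond_false] <;> constructor <;> nlinarith [ih.1, ih.2]

theorem sval_surj (r : ℕ) : ∀ v < 2 ^ r, ∃ q : BStr, q.length = r ∧ sval q = v := by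
  induction r with
  | zero => intro v hv; exact ⟨[], rfl, by simp at hv; simp [sval, hv]⟩
  | succ r ih =>
    intro v hv
    obtain ⟨q, h1, h2⟩ := ih (v / 2) (by rw [pow_succ] at hv; omega)
    refine ⟨q ++ [decide (v % 2 = 1)], by simp [h1], ?_⟩
    rw [sval_concat, h2]
    by_cases h : v % 2 = 1
    · simp [h]; omega
    · simp [h]; omega

/-- weight of a request -/
noncomputable def wt : Option (ℕ × ℕ) → ℝ
  | none => 0
  | some p => (1 / 2) ^ p.1

theorem wt_nonneg (o : Option (ℕ × ℕ)) : 0 ≤ wt o := by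
  cases o <;> simp [wt]

/-- One step of the partial sum computation (numerator, denominator). -/
def ndStep (o : Option (ℕ × ℕ)) (p : ℕ × ℕ) : ℕ × ℕ :=
  match o with
  | none => p
  | some a => (p.1 * 2 ^ a.1 + p.2, p.2 * 2 ^ a.1)

/-- Partial sums of the weights. -/
def nd (R : ℕ → Option (ℕ × ℕ)) : ℕ → ℕ × ℕ :=
  Nat.rec (0, 1) fun i p => ndStep (R i) p

theorem nd_succ (R : ℕ → Option (ℕ × ℕ)) (i : ℕ) : nd R (i + 1) = ndStep (R i) (nd R i) := rfl

theorem nd_spec (R : ℕ → Option (ℕ × ℕ)) (i : ℕ) : 0 < (nd R i).2 ∧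
    ((nd R i).1 : ℝ) = (∑ k ∈ Finset.range i, wt (R k)) * (nd R i).2 := by
  induction i with
  | zero => simp [nd]
  | succ i ih =>
    rw [nd_succ, Finset.sum_range_succ]
    rcases h : R i with _ | a
    · simpa [ndStep, wt] using ih
    · refine ⟨by simp only [ndStep]; have := ih.1; positivity, ?_⟩
      have hw : wt (some a) = (1 / 2) ^ a.1 := rfl
      rw [hw]
      simp only [ndStep]
      push_cast
      rw [ih.2]
      have : ((1:ℝ) / 2) ^ a.1 * 2 ^ a.1 = 1 := by rw [← mul_pow]; norm_num
      linear_combination (-((nd R i).2 : ℝ)) * this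

/-- The string `q` is a code word for request `i`. -/
def Good (R : ℕ → Option (ℕ × ℕ)) (q : BStr) (i : ℕ) (r : ℕ) : Prop :=
  q.length = r + 2 ∧ (nd R i).1 * 2 ^ q.length ≤ 2 * sval q * (nd R i).2 ∧
    2 * (sval q + 1) * (nd R (i + 1)).2 ≤ (nd R (i + 1)).1 * 2 ^ q.length

instance (R : ℕ → Option (ℕ × ℕ)) (q : BStr) (i : ℕ) (r : ℕ) : Decidable (Good R q i r) := by
  unfold Good; infer_instance

theorem good_real {R : ℕ → Option (ℕ × ℕ)} {q : BStr} {i r : ℕ} :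
    Good R q i r ↔ q.length = r + 2 ∧
      (∑ k ∈ Finset.range i, wt (R k)) * 2 ^ q.length ≤ 2 * (sval q : ℝ) ∧
      2 * ((sval q : ℝ) + 1) ≤ (∑ k ∈ Finset.range (i + 1), wt (R k)) * 2 ^ q.length := by
  unfold Good
  obtain ⟨h1, h2⟩ := nd_spec R i
  obtain ⟨h3, h4⟩ := nd_spec R (i + 1)
  have h1' : (0:ℝ) < (nd R i).2 := by exact_mod_cast h1
  have h3' : (0:ℝ) < (nd R (i + 1)).2 := by exact_mod_cast h3
  refine and_congr Iff.rfl (and_congr ?_ ?_)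
  · rw [← Nat.cast_le (α := ℝ)]
    push_cast
    rw [h2, mul_right_comm, mul_le_mul_iff_left₀ h1']
  · rw [← Nat.cast_le (α := ℝ)]
    push_cast
    rw [h4, mul_right_comm _ _ ((2:ℝ) ^ _), mul_le_mul_iff_left₀ h3']

theorem good_unique {R : ℕ → Option (ℕ × ℕ)} {q q' : BStr} {i i' r r' : ℕ}
    (h : Good R q i r) (h' : Good R q' i' r') (hq : q <+: q') : i = i' := by
  rw [good_real] at h h'
  obtain ⟨t, rfl⟩ := hq
  obtain ⟨-, a1, a2⟩ := h
  obtain ⟨-, b1, b2⟩ := h'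
  obtain ⟨c1, c2⟩ := sval_append q t
  have c1' : (sval q : ℝ) * 2 ^ t.length ≤ sval (q ++ t) := by exact_mod_cast c1
  have c2' : (sval (q ++ t) : ℝ) + 1 ≤ (sval q + 1) * 2 ^ t.length := by exact_mod_cast c2
  rw [List.length_append, pow_add] at b1 b2
  have hmono : Monotone fun m => ∑ k ∈ Finset.range m, wt (R k) := by
    intro m m' hm
    exact Finset.sum_le_sum_of_subset_of_nonneg (by simpa using hm) fun k _ _ => wt_nonneg _
  have hu : (0:ℝ) < 2 ^ q.length := by positivity
  have hv : (0:ℝ) < 2 ^ t.length := by positivity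
  have hlt : ∀ m m', (∑ k ∈ Finset.range m, wt (R k)) < ∑ k ∈ Finset.range m', wt (R k) →
      m < m' := fun m m' hm => hmono.reflect_lt hm
  have l1 : i < i' + 1 := by
    apply hlt
    have := mul_le_mul_of_nonneg_right a1 hv.le
    refine lt_of_mul_lt_mul_right (a := 2 ^ q.length * 2 ^ t.length) ?_ (by positivity)
    rw [← mul_assoc]
    linarith
  have l2 : i' < i + 1 := by
    apply hlt
    have := mul_le_mul_of_nonneg_right a2 hv.le
    refine lt_of_mul_lt_mul_right (a := 2 ^ q.length * 2 ^ t.length) ?_ (by positivity)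
    rw [← mul_assoc _ ((2:ℝ) ^ q.length)]
    linarith
  omega

theorem good_exists {R : ℕ → Option (ℕ × ℕ)}
    (hsum : ∀ I, ∑ i ∈ Finset.range I, wt (R i) ≤ 2) {i r n : ℕ} (hi : R i = some (r, n)) :
    ∃ q, Good R q i r := by
  set S := ∑ k ∈ Finset.range i, wt (R k) with hS
  have hS0 : 0 ≤ S := Finset.sum_nonneg fun k _ => wt_nonneg _
  have hS1 : ∑ k ∈ Finset.range (i + 1), wt (R k) = S + (1 / 2) ^ r := by
    rw [Finset.sum_range_succ, hi, wt]
  have hpow : ((1:ℝ) / 2) ^ r * 2 ^ r = 1 := by rw [← mul_pow]; norm_num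
  have hx1 := Nat.le_ceil (S * 2 ^ (r + 1))
  have hx2 := Nat.ceil_lt_add_one (a := S * 2 ^ (r + 1)) (by positivity)
  have hle := hsum (i + 1)
  rw [hS1] at hle
  have hp : (0:ℝ) < 2 ^ r := by positivity
  rw [pow_succ] at hx1 hx2
  have hv : ⌈S * (2 ^ r * 2)⌉₊ < 2 ^ (r + 2) := by
    rw [← Nat.cast_lt (α := ℝ)]
    push_cast
    rw [pow_add]
    nlinarith
  obtain ⟨q, hq1, hq2⟩ := sval_surj (r + 2) _ hv
  refine ⟨q, good_real.2 ⟨hq1, ?_, ?_⟩⟩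
  · rw [hq1, hq2, pow_add, ← hS]
    linarith
  · rw [hq1, hq2, pow_add, hS1]
    linarith

theorem primrec_pow : Primrec₂ (fun a b : ℕ => a ^ b) := Primrec₂.unpaired'.1 Nat.Primrec.pow

theorem primrec_nd {R : ℕ → Option (ℕ × ℕ)} (hR : Primrec R) : Primrec (nd R) := by
  refine Primrec.nat_rec₁ _ ?_
  have hp : Primrec fun z : (ℕ × (ℕ × ℕ)) × (ℕ × ℕ) => 2 ^ z.2.1 :=
    primrec_pow.comp (Primrec.const 2) (Primrec.fst.comp Primrec.snd)
  have hN : Primrec fun z : (ℕ × (ℕ × ℕ)) × (ℕ × ℕ) => z.1.2.1 :=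
    Primrec.fst.comp (Primrec.snd.comp Primrec.fst)
  have hD : Primrec fun z : (ℕ × (ℕ × ℕ)) × (ℕ × ℕ) => z.1.2.2 :=
    Primrec.snd.comp (Primrec.snd.comp Primrec.fst)
  have := Primrec.option_casesOn (hR.comp (Primrec.fst (α := ℕ) (β := ℕ × ℕ))) Primrec.snd
    (Primrec.pair (Primrec.nat_add.comp (Primrec.nat_mul.comp hN hp) hD)
      (Primrec.nat_mul.comp hD hp)).to₂
  refine this.of_eq ?_
  rintro ⟨i, p⟩
  simp only [ndStep]
  cases R i <;> rfl

theorem primrec_sval : Primrec sval := by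
  refine Primrec.list_foldl Primrec.id (Primrec.const 0) (h := fun _ p => 2 * p.1 + cond p.2 1 0) ?_
  exact Primrec.nat_add.comp
    (Primrec.nat_mul.comp (Primrec.const 2) (Primrec.fst.comp Primrec.snd))
    (Primrec.cond (Primrec.snd.comp Primrec.snd) (Primrec.const 1) (Primrec.const 0))

theorem primrec_numStr : Primrec numStr := by
  refine (Primrec.list_map Primrec.list_range (Primrec.const false).to₂).of_eq ?_
  intro n
  simp [numStr, List.map_const']

/-- One search step of the coding machine. -/
def kcg (R : ℕ → Option (ℕ × ℕ)) (q : BStr) (i : ℕ) : Option BStr :=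
  (R i).bind fun a => if Good R q i a.1 then some (numStr a.2) else none

theorem primrec_kcg {R : ℕ → Option (ℕ × ℕ)} (hR : Primrec R) : Primrec₂ (kcg R) := by
  have hnd := primrec_nd hR
  refine Primrec.option_bind (hR.comp Primrec.snd) ?_
  refine Primrec.ite ?_ (Primrec.option_some.comp (primrec_numStr.comp
    (Primrec.snd.comp Primrec.snd))) (Primrec.const none)
  have hq : Primrec fun z : (BStr × ℕ) × (ℕ × ℕ) => z.1.1 := Primrec.fst.comp Primrec.fst
  have hi : Primrec fun z : (BStr × ℕ) × (ℕ × ℕ) => z.1.2 := Primrec.snd.comp Primrec.fst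
  have hl := Primrec.list_length.comp hq
  have hs := primrec_sval.comp hq
  have hp := primrec_pow.comp (Primrec.const 2) hl
  have hn1 := hnd.comp hi
  have hn2 := hnd.comp (Primrec.succ.comp hi)
  refine PrimrecPred.and (Primrec.eq.comp hl
    (Primrec.nat_add.comp (Primrec.fst.comp Primrec.snd) (Primrec.const 2))) (PrimrecPred.and ?_ ?_)
  · exact Primrec.nat_le.comp (Primrec.nat_mul.comp (Primrec.fst.comp hn1) hp)
      (Primrec.nat_mul.comp (Primrec.nat_mul.comp (Primrec.const 2) hs) (Primrec.snd.comp hn1))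
  · exact Primrec.nat_le.comp
      (Primrec.nat_mul.comp (Primrec.nat_mul.comp (Primrec.const 2) (Primrec.succ.comp hs))
        (Primrec.snd.comp hn2))
      (Primrec.nat_mul.comp (Primrec.fst.comp hn2) hp)

theorem mem_kcg {R : ℕ → Option (ℕ × ℕ)} {q : BStr} {i : ℕ} {x : BStr} :
    x ∈ kcg R q i ↔ ∃ r n, R i = some (r, n) ∧ Good R q i r ∧ x = numStr n := by
  simp only [kcg, Option.mem_def, Option.bind_eq_some_iff]
  constructor
  · rintro ⟨⟨r, n⟩, h1, h2⟩
    split_ifs at h2 with h3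
    exact ⟨r, n, h1, h3, by simpa using h2.symm⟩
  · rintro ⟨r, n, h1, h2, rfl⟩
    exact ⟨(r, n), h1, by simp [h2]⟩

theorem cpx_le {U : BStr →. BStr} {q x : BStr} (h : x ∈ U q) : cpx U x ≤ q.length :=
  Nat.sInf_le ⟨q, rfl, h⟩

theorem kraft_chaitin {U : BStr →. BStr} (hU : UniversalPrefixFree U)
    {R : ℕ → Option (ℕ × ℕ)} (hR : Primrec R)
    (hsum : ∀ I, ∑ i ∈ Finset.range I, wt (R i) ≤ 2) :
    ∃ c : ℕ, ∀ i r n, R i = some (r, n) → cpxN U n ≤ r + c := by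
  let M : BStr →. BStr := fun q => Nat.rfindOpt (kcg R q)
  have hM : Partrec M := Partrec.rfindOpt (primrec_kcg hR).to_comp
  have hpf : PrefixFreeDom M := by
    intro p q hp hq hpq
    obtain ⟨i, x, hx⟩ := Nat.rfindOpt_dom.1 hp
    obtain ⟨i', x', hx'⟩ := Nat.rfindOpt_dom.1 hq
    obtain ⟨r, n, h1, h2, -⟩ := mem_kcg.1 hx
    obtain ⟨r', n', h1', h2', -⟩ := mem_kcg.1 hx'
    obtain rfl := good_unique h2 h2' hpq
    rw [h1] at h1'
    simp only [Option.some.injEq, Prod.mk.injEq] at h1'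
    exact hpq.eq_of_length (by rw [h2.1, h2'.1, h1'.1])
  obtain ⟨c, hc⟩ := hU.2.2 M hM hpf
  refine ⟨2 + c, fun i r n hi => ?_⟩
  obtain ⟨q, hq⟩ := good_exists hsum hi
  have hmem : numStr n ∈ M q := by
    have hd : (M q).Dom := Nat.rfindOpt_dom.2 ⟨i, _, mem_kcg.2 ⟨r, n, hi, hq, rfl⟩⟩
    obtain ⟨i', hi'⟩ := Nat.rfindOpt_spec (Part.get_mem hd)
    obtain ⟨r', n', h1, h2, h3⟩ := mem_kcg.1 hi'
    obtain rfl := good_unique hq h2 List.prefix_rfl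
    rw [hi] at h1
    simp only [Option.some.injEq, Prod.mk.injEq] at h1
    rw [h1.2, ← h3]
    exact Part.get_mem hd
  obtain ⟨q', hl, hq'⟩ := hc q _ hmem
  have := cpx_le hq'
  have := hq.1
  unfold cpxN
  omega

theorem kraft_ineq {S : Finset BStr} (hS : ∀ p ∈ S, ∀ q ∈ S, p <+: q → p = q) :
    ∑ q ∈ S, ((1:ℝ) / 2) ^ q.length ≤ 1 := by
  by_cases hnil : [] ∈ S
  · have : S = {[]} := by
      ext q
      simp only [Finset.mem_singleton]
      exact ⟨fun hq => (hS _ hnil _ hq ⟨q, rfl⟩).symm, fun h => h ▸ hnil⟩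
    simp [this]
  · have hud : InformationTheory.UniquelyDecodable (S : Set BStr) := by
      intro L₁
      induction L₁ with
      | nil =>
        intro L₂ _ h2 h
        rcases L₂ with _ | ⟨w, L₂⟩
        · rfl
        · simp at h
          simp only [List.mem_cons, forall_eq_or_imp, Finset.mem_coe] at h2
          exact absurd (h.1 ▸ h2.1) hnil
      | cons w L ih =>
        intro L₂ h1 h2 h
        rcases L₂ with _ | ⟨w', L₂⟩
        · simp at h
          simp only [List.mem_cons, forall_eq_or_imp, Finset.mem_coe] at h1
          exact absurd (h.1 ▸ h1.1) hnil
        · simp only [List.mem_cons, forall_eq_or_imp, Finset.mem_coe] at h1 h2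
          simp only [List.flatten_cons] at h
          have hww : w = w' := by
            rcases List.append_eq_append_iff.1 h with ⟨l, hl, -⟩ | ⟨l, hl, -⟩
            · exact hS _ h1.1 _ h2.1 ⟨l, hl.symm⟩
            · exact (hS _ h2.1 _ h1.1 ⟨l, hl.symm⟩).symm
          subst hww
          rw [ih L₂ h1.2 h2.2 (List.append_cancel_left h)]
    have := InformationTheory.kraft_mcmillan_inequality hud
    simpa using this

/-- weight of a request, as an extended nonnegative real -/
noncomputable def ew (o : Option (ℕ × ℕ)) : ENNReal := ENNReal.ofReal (wt o)

/-- The request sequence obtained from an enumeration of (length, output length). -/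
def reqs (E : ℕ → Option (ℕ × ℕ)) (i : ℕ) : Option (ℕ × ℕ) :=
  (E i.unpair.1).bind fun a =>
    if Nat.count (fun s' => E s' = some a) i.unpair.1 + 1 = 4 ^ i.unpair.2 then
      some (a.1 - i.unpair.2, a.2) else none

theorem primrec_count {E : ℕ → Option (ℕ × ℕ)} (hE : Primrec E) :
    Primrec₂ fun (a : ℕ × ℕ) (s : ℕ) => Nat.count (fun s' => E s' = some a) s := by
  have h := Primrec.nat_rec (α := ℕ × ℕ) (β := ℕ) (f := fun _ => 0)
    (g := fun a p => if E p.1 = some a then p.2 + 1 else p.2) (Primrec.const 0) (by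
      refine Primrec.ite (Primrec.eq.comp (hE.comp (Primrec.fst.comp Primrec.snd))
        (Primrec.option_some.comp Primrec.fst)) ?_ ?_
      · exact Primrec.succ.comp (Primrec.snd.comp Primrec.snd)
      · exact Primrec.snd.comp Primrec.snd)
  refine h.of_eq ?_
  intro a s
  induction s with
  | zero => simp
  | succ s ih =>
    simp only at ih ⊢
    rw [Nat.count_succ, ← ih]
    split_ifs <;> simp

theorem primrec_reqs {E : ℕ → Option (ℕ × ℕ)} (hE : Primrec E) : Primrec (reqs E) := by
  have hl : Primrec fun s : ℕ => s.unpair.1 := Primrec.fst.comp Primrec.unpair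
  have hr : Primrec fun s : ℕ => s.unpair.2 := Primrec.snd.comp Primrec.unpair
  refine Primrec.option_bind (hE.comp hl) ?_
  refine Primrec.ite (Primrec.eq.comp
    (Primrec.succ.comp ((primrec_count hE).comp Primrec.snd (hl.comp Primrec.fst)))
    (primrec_pow.comp (Primrec.const 4) (hr.comp Primrec.fst))) ?_ (Primrec.const none)
  exact Primrec.option_some.comp (Primrec.pair
    (Primrec.nat_sub.comp (Primrec.fst.comp Primrec.snd) (hr.comp Primrec.fst))
    (Primrec.snd.comp Primrec.snd))

theorem reqs_sum {E : ℕ → Option (ℕ × ℕ)}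
    (hE : ∀ T : Finset ℕ, ∑ s ∈ T, wt (E s) ≤ 1) (I : ℕ) :
    ∑ i ∈ Finset.range I, wt (reqs E i) ≤ 2 := by
  classical
  have hE1 : ∑' s, ew (E s) ≤ 1 := by
    refine ENNReal.summable.tsum_le_of_sum_le fun T => ?_
    unfold ew
    rw [← ENNReal.ofReal_sum_of_nonneg fun _ _ => wt_nonneg _, ENNReal.ofReal_le_one]
    exact hE T
  let C : ℕ → ℕ → ℕ → Prop := fun j s s' => s' ≤ s ∧ ∃ a, E s = some a ∧ E s' = some a ∧
    Nat.count (fun s' => E s' = some a) s + 1 = 4 ^ j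
  have hC : ∀ j s' s₁ s₂, C j s₁ s' → C j s₂ s' → s₁ = s₂ := by
    rintro j s' s₁ s₂ ⟨-, a, h1, h2, h3⟩ ⟨-, b, h1', h2', h3'⟩
    rw [h2] at h2'
    obtain rfl : a = b := by simpa using h2'
    exact Nat.count_injective (p := fun s' => E s' = some a) h1 h1' (by omega)
  have hbd : ∀ j s, ew (reqs E (Nat.pair s j)) ≤
      2⁻¹ ^ j * ∑' s', if C j s s' then ew (E s') else 0 := by
    intro j s
    rcases hr : reqs E (Nat.pair s j) with _ | ⟨r, n⟩
    · simp [ew, wt]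
    · simp only [reqs, Nat.unpair_pair, Option.bind_eq_some_iff] at hr
      obtain ⟨a, ha, hr⟩ := hr
      split_ifs at hr with hcnt
      simp only [Option.some.injEq, Prod.mk.injEq] at hr
      have hsub : ∑ s' ∈ (Finset.range (s + 1)).filter (fun s' => E s' = some a), ew (some a)
          ≤ ∑' s', if C j s s' then ew (E s') else 0 := by
        refine le_trans (le_of_eq ?_) (ENNReal.sum_le_tsum
          ((Finset.range (s + 1)).filter (fun s' => E s' = some a)))
        refine Finset.sum_congr rfl fun s' hs' => ?_
        simp only [Finset.mem_filter, Finset.mem_range] at hs'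
        rw [if_pos ⟨by omega, a, ha, hs'.2, hcnt⟩, hs'.2]
      refine le_trans ?_ (mul_le_mul_right hsub _)
      rw [Finset.sum_const, ← Nat.count_eq_card_filter_range, Nat.count_succ, if_pos ha, hcnt]
      unfold ew
      have h2 : (2⁻¹ : ENNReal) = ENNReal.ofReal (1 / 2) := by
        rw [one_div, ENNReal.ofReal_inv_of_pos (by norm_num)]; simp
      rw [h2, ← ENNReal.ofReal_pow (by norm_num), ← ENNReal.ofReal_nsmul,
        ← ENNReal.ofReal_mul (by positivity)]
      refine ENNReal.ofReal_le_ofReal ?_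
      simp only [wt, nsmul_eq_mul]
      push_cast
      rw [← hr.1]
      have e1 : ((1:ℝ) / 2) ^ j * 4 ^ j = 2 ^ j := by rw [← mul_pow]; norm_num
      rw [← mul_assoc, e1]
      have e2 : ((1:ℝ) / 2) ^ (a.1 - j) = 2 ^ j * (1 / 2) ^ (a.1 - j + j) := by
        rw [pow_add, mul_comm ((2:ℝ) ^ j), mul_assoc, ← mul_pow]; norm_num
      rw [e2]
      refine mul_le_mul_of_nonneg_left ?_ (by positivity)
      exact pow_le_pow_of_le_one (by norm_num) (by norm_num) (by omega)
  have hj : ∀ j, ∑' s, ew (reqs E (Nat.pair s j)) ≤ 2⁻¹ ^ j := by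
    intro j
    refine (ENNReal.tsum_le_tsum (hbd j)).trans ?_
    rw [ENNReal.tsum_mul_left, ENNReal.tsum_comm]
    refine (mul_le_mul_right (le_trans (ENNReal.tsum_le_tsum fun s' => ?_) hE1) _).trans
      (mul_one _).le
    by_cases h : ∃ s, C j s s'
    · obtain ⟨s, hs⟩ := h
      rw [tsum_eq_single s, if_pos hs]
      intro s₂ hne
      rw [if_neg fun h2 => hne (hC j s' _ _ h2 hs)]
    · push Not at h
      simp [h]
  have htot : ∑' i, ew (reqs E i) ≤ 2 := by
    rw [← Nat.pairEquiv.tsum_eq, ENNReal.tsum_prod', ENNReal.tsum_comm]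
    refine (ENNReal.tsum_le_tsum hj).trans ?_
    rw [ENNReal.tsum_geometric, ENNReal.one_sub_inv_two, inv_inv]
  have := (ENNReal.sum_le_tsum (f := fun i => ew (reqs E i)) (Finset.range I)).trans htot
  unfold ew at this
  rw [← ENNReal.ofReal_sum_of_nonneg fun _ _ => wt_nonneg _] at this
  have h2 : (2 : ENNReal) = ENNReal.ofReal 2 := by simp
  rw [h2, ENNReal.ofReal_le_ofReal_iff (by norm_num)] at this
  exact this

theorem exists_prog {U : BStr →. BStr} (hU : UniversalPrefixFree U) (x : BStr) :
    ∃ q : BStr, q.length = cpx U x ∧ x ∈ U q := by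
  let M : BStr →. BStr := fun q => ((if q = [] then some x else none : Option BStr) : Part BStr)
  have hM : Partrec M := by
    refine Computable.ofOption (Primrec.to_comp ?_)
    exact Primrec.ite (Primrec.eq.comp Primrec.id (Primrec.const [])) (Primrec.const _)
      (Primrec.const _)
  have hdom : ∀ p, (M p).Dom → p = [] := by
    intro p hp
    by_contra h
    simp [M, h] at hp
  obtain ⟨c, hc⟩ := hU.2.2 M hM fun p q hp hq _ => by rw [hdom p hp, hdom q hq]
  obtain ⟨q, -, hq⟩ := hc [] x (by simp [M])
  exact Nat.sInf_mem (s := {n | ∃ q : BStr, q.length = n ∧ x ∈ U q}) ⟨_, q, rfl, hq⟩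

theorem counting {U : BStr →. BStr} (hU : UniversalPrefixFree U)
    (hlen : ∀ x : BStr, cpxN U x.length ≤ cpx U x) (b : ℕ) :
    ∃ N : ℕ, ∀ n, (Finset.univ.filter fun v : Fin n → Bool =>
      cpx U (List.ofFn v) ≤ cpxN U n + b).card ≤ N := by
  classical
  obtain ⟨e, he, he1, he2, he3⟩ := enum_dom U hU.1
  let E : ℕ → Option (ℕ × ℕ) := fun s => (e s).map fun p => (p.1.length, p.2.length)
  have hE : Primrec E := Primrec.option_map he (Primrec.pair
    (Primrec.list_length.comp (Primrec.fst.comp Primrec.snd))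
    (Primrec.list_length.comp (Primrec.snd.comp Primrec.snd)))
  have hEs : ∀ T : Finset ℕ, ∑ s ∈ T, wt (E s) ≤ 1 := by
    intro T
    let f : ℕ → BStr := fun s => ((e s).map Prod.fst).getD []
    have h1 : ∑ s ∈ T, wt (E s) = ∑ s ∈ T.filter (fun s => (e s).isSome),
        ((1:ℝ) / 2) ^ (f s).length := by
      rw [Finset.sum_filter]
      refine Finset.sum_congr rfl fun s _ => ?_
      rcases h : e s with _ | p
      · simp [E, h, wt]
      · simp [E, h, wt, f]
    have hinj : Set.InjOn f (T.filter (fun s => (e s).isSome) : Finset ℕ) := by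
      intro s hs s' hs' hf
      simp only [Finset.coe_filter, Set.mem_ofPred_eq] at hs hs'
      obtain ⟨⟨q, x⟩, h⟩ := Option.isSome_iff_exists.1 hs.2
      obtain ⟨⟨q', x'⟩, h'⟩ := Option.isSome_iff_exists.1 hs'.2
      simp only [f, h, h', Option.map_some, Option.getD_some] at hf
      subst hf
      exact he3 _ _ _ _ _ h h'
    rw [h1, ← Finset.sum_image (f := fun q : BStr => ((1:ℝ) / 2) ^ q.length) hinj]
    refine kraft_ineq ?_
    have hd : ∀ p ∈ (T.filter (fun s => (e s).isSome)).image f, (U p).Dom := by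
      intro p hp
      simp only [Finset.mem_image, Finset.mem_filter] at hp
      obtain ⟨s, ⟨-, hs⟩, rfl⟩ := hp
      obtain ⟨⟨q, x⟩, h⟩ := Option.isSome_iff_exists.1 hs
      simp only [f, h, Option.map_some, Option.getD_some]
      exact Part.dom_iff_mem.2 ⟨x, he1 _ _ _ h⟩
    exact fun p hp q hq hpq => hU.2.1 p q (hd p hp) (hd q hq) hpq
  obtain ⟨c, hc⟩ := kraft_chaitin hU (primrec_reqs hE) (reqs_sum hEs)
  let j := b + c + 1
  refine ⟨(b + 1) * 4 ^ j, fun n => ?_⟩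
  by_contra hcon
  push Not at hcon
  obtain ⟨i, hi, hcard⟩ := Finset.exists_lt_card_fiber_of_mul_lt_card_of_maps_to
    (s := Finset.univ.filter fun v : Fin n → Bool => cpx U (List.ofFn v) ≤ cpxN U n + b)
    (t := Finset.range (b + 1)) (n := 4 ^ j)
    (f := fun v : Fin n → Bool => cpx U (List.ofFn v) - cpxN U n) (by
      intro v hv
      have hv' := (Finset.mem_filter.1 hv).2
      refine Finset.mem_range.2 ?_
      show cpx U (List.ofFn v) - cpxN U n < b + 1
      omega) (by simpa using hcon)
  simp only [Finset.mem_range] at hi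
  set F := Finset.filter (fun v : Fin n → Bool => cpx U (List.ofFn v) - cpxN U n = i)
    (Finset.univ.filter fun v : Fin n → Bool => cpx U (List.ofFn v) ≤ cpxN U n + b) with hF
  let l := cpxN U n + i
  have hFl : ∀ v ∈ F, cpx U (List.ofFn v) = l := by
    intro v hv
    simp only [hF, Finset.mem_filter] at hv
    have := hlen (List.ofFn v)
    rw [List.length_ofFn] at this
    omega
  choose pr hpr1 hpr2 using exists_prog hU
  choose st hst using he2
  let g : (Fin n → Bool) → ℕ := fun v => st (pr (List.ofFn v)) (List.ofFn v) (hpr2 _)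
  have hge : ∀ v, e (g v) = some (pr (List.ofFn v), List.ofFn v) := fun v => hst _ _ _
  have hgE : ∀ v ∈ F, E (g v) = some (l, n) := by
    intro v hv
    simp only [E, hge, Option.map_some, hpr1, hFl v hv, List.length_ofFn]
  have hginj : Set.InjOn g F := by
    intro v _ v' _ h
    have h1 := hge v
    rw [h, hge v'] at h1
    simp only [Option.some.injEq, Prod.mk.injEq] at h1
    exact (List.ofFn_injective h1.2).symm
  -- the stage at which the count reaches `4 ^ j`
  let B := (F.image g).sup id + 1
  have hBcount : 4 ^ j ≤ Nat.count (fun s => E s = some (l, n)) B := by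
    rw [Nat.count_eq_card_filter_range]
    refine hcard.le.trans ?_
    rw [← Finset.card_image_of_injOn hginj]
    refine Finset.card_le_card fun s hs => ?_
    have hle : id s ≤ (F.image g).sup id := Finset.le_sup hs
    simp only [Finset.mem_filter, Finset.mem_range]
    refine ⟨Nat.lt_succ_of_le hle, ?_⟩
    obtain ⟨v, hv, rfl⟩ := Finset.mem_image.1 hs
    exact hgE v hv
  have hex : ∃ B, 4 ^ j ≤ Nat.count (fun s => E s = some (l, n)) B := ⟨B, hBcount⟩
  have hsp := Nat.find_spec hex
  rcases hfind : Nat.find hex with _ | s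
  · rw [hfind] at hsp
    simp at hsp
  · have hmin := Nat.find_min hex (m := s) (by omega)
    rw [hfind, Nat.count_succ] at hsp
    have hEs' : E s = some (l, n) := by
      by_contra hne
      rw [if_neg hne] at hsp
      exact hmin (by omega)
    rw [if_pos hEs'] at hsp
    have hreq : reqs E (Nat.pair s j) = some (l - j, n) := by
      simp only [reqs, Nat.unpair_pair, hEs', Option.bind_some]
      rw [if_pos (by omega)]
    have hk := hc _ _ _ hreq
    have h4 : 4 ^ j ≤ 2 ^ l := by
      have h5 : F.card ≤ 2 ^ l := by
        have : F.card ≤ (Finset.univ : Finset (Fin l → Bool)).card := by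
          refine Finset.card_le_card_of_injOn
            (fun v => fun t : Fin l => (pr (List.ofFn v)).getD t.1 false) (by simp) ?_
          intro v hv v' hv' h
          have hl1 : (pr (List.ofFn v)).length = l := by rw [hpr1, hFl v hv]
          have hl2 : (pr (List.ofFn v')).length = l := by rw [hpr1, hFl v' hv']
          have heq : pr (List.ofFn v) = pr (List.ofFn v') := by
            refine List.ext_getElem (by rw [hl1, hl2]) fun t ht1 ht2 => ?_
            have := congrFun h ⟨t, by omega⟩
            simpa [List.getD_eq_getElem, ht1, ht2] using this
          have m1 := hpr2 (List.ofFn v)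
          have m2 := hpr2 (List.ofFn v')
          rw [← heq] at m2
          exact List.ofFn_injective (Part.mem_unique m1 m2)
        simpa using this
      omega
    have h6 : 2 * j ≤ l := by
      have : (2:ℕ) ^ (2 * j) ≤ 2 ^ l := by rw [pow_mul]; exact h4
      exact (Nat.pow_le_pow_iff_right (by norm_num)).1 this
    omega

/-- Restriction to the first `n` bits. -/
def rst (n : ℕ) (Z : Cantor) : Fin n → Bool := fun i => Z i.1

theorem cyl_ofFn {n : ℕ} (v : Fin n → Bool) : cyl (List.ofFn v) = rst n ⁻¹' {v} := by
  ext Z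
  simp only [cyl, Set.mem_ofPred_eq, Set.mem_preimage, Set.mem_singleton_iff, funext_iff, rst]
  constructor
  · intro h i
    simpa using h ⟨i.1, by simp⟩
  · intro h i
    have := h ⟨i.1, by simpa using i.2⟩
    simpa using this

theorem measurable_rst (n : ℕ) : Measurable (rst n) :=
  measurable_pi_lambda _ fun i => measurable_pi_apply i.1

theorem markov_step {U : BStr →. BStr}
    (hlen : ∀ x : BStr, cpxN U x.length ≤ cpx U x)
    (μ : Measure Cantor) [IsProbabilityMeasure μ] {n p : ℕ} (b : ℕ)
    (h : avgCpx U μ n ≤ (cpxN U n : ℝ) + (p : ℝ)) :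
    1 ≤ μ (rst n ⁻¹' ((Finset.univ.filter fun v : Fin n → Bool =>
      cpx U (List.ofFn v) ≤ cpxN U n + b : Finset (Fin n → Bool)) : Set (Fin n → Bool))) +
      ENNReal.ofReal (p / (b + 1 : ℝ)) := by
  classical
  set A := Finset.univ.filter fun v : Fin n → Bool => cpx U (List.ofFn v) ≤ cpxN U n + b with hA
  let w : (Fin n → Bool) → ℝ := fun v => (μ (cyl (List.ofFn v))).toReal
  have hw0 : ∀ v, 0 ≤ w v := fun v => ENNReal.toReal_nonneg
  have hwsum : ∀ B : Finset (Fin n → Bool), ∑ v ∈ B, w v = (μ (rst n ⁻¹' (B : Set _))).toReal := by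
    intro B
    simp only [w, cyl_ofFn]
    rw [← ENNReal.toReal_sum fun v _ => measure_ne_top μ _,
      sum_measure_preimage_singleton B fun v _ => measurable_rst n (measurableSet_singleton v)]
  have htot : ∑ v, w v = 1 := by
    rw [hwsum]
    simp
  have hsplit := Finset.sum_filter_add_sum_filter_not Finset.univ
    (fun v : Fin n → Bool => cpx U (List.ofFn v) ≤ cpxN U n + b) w
  rw [← hA, htot] at hsplit
  set Bs := ∑ v ∈ Finset.univ.filter (fun v : Fin n → Bool =>
    ¬ cpx U (List.ofFn v) ≤ cpxN U n + b), w v with hBs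
  have hBp : (b + 1 : ℝ) * Bs ≤ p := by
    have h1 : avgCpx U μ n - cpxN U n = ∑ v : Fin n → Bool,
        ((cpx U (List.ofFn v) : ℝ) - cpxN U n) * w v := by
      simp only [sub_mul, Finset.sum_sub_distrib, ← Finset.mul_sum, htot, mul_one]
      rfl
    have h2 : (b + 1 : ℝ) * Bs ≤ ∑ v : Fin n → Bool,
        ((cpx U (List.ofFn v) : ℝ) - cpxN U n) * w v := by
      rw [hBs, Finset.mul_sum, Finset.sum_filter]
      refine Finset.sum_le_sum fun v _ => ?_
      have hl := hlen (List.ofFn v)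
      rw [List.length_ofFn] at hl
      by_cases hv : cpx U (List.ofFn v) ≤ cpxN U n + b
      swap
      · rw [if_pos hv]
        refine mul_le_mul_of_nonneg_right ?_ (hw0 v)
        have : (cpxN U n + b + 1 : ℕ) ≤ cpx U (List.ofFn v) := by omega
        have : ((cpxN U n + b + 1 : ℕ) : ℝ) ≤ cpx U (List.ofFn v) := by exact_mod_cast this
        push_cast at this
        linarith
      · rw [if_neg (not_not.2 hv)]
        refine mul_nonneg ?_ (hw0 v)
        have : (cpxN U n : ℝ) ≤ cpx U (List.ofFn v) := by exact_mod_cast hl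
        linarith
    linarith
  have hBs' : Bs ≤ p / (b + 1 : ℝ) := by
    rw [le_div_iff₀ (by positivity)]
    linarith
  rw [hwsum] at hsplit
  rw [← ENNReal.ofReal_toReal (measure_ne_top μ _), ← ENNReal.ofReal_add ENNReal.toReal_nonneg
    (by positivity), ENNReal.one_le_ofReal]
  linarith

theorem atoms_of_small (μ : Measure Cantor) [IsProbabilityMeasure μ] (N : ℕ) (ε : ENNReal)
    (h : ∀ m : ℕ, ∃ n ≥ m, ∃ A : Finset (Fin n → Bool), A.card ≤ N ∧
      1 ≤ μ (rst n ⁻¹' (A : Set (Fin n → Bool))) + ε) :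
    1 ≤ μ {Z : Cantor | 0 < μ {Z}} + ε := by
  classical
  have hf : ∀ m : ℕ, ∃ f : Fin N → Cantor, 1 ≤ μ {Z | ∃ i, ∀ t < m, Z t = f i t} + ε := by
    intro m
    obtain ⟨n, hn, A, hA, hμ⟩ := h m
    have hcov : ∃ g : Fin N → (Fin n → Bool), ∀ v ∈ A, ∃ i, g i = v := by
      let emb : A → Fin N := fun v => Fin.castLE hA (A.equivFin v)
      have hemb : Function.Injective emb := fun v v' hv => by
        simpa [emb] using hv
      refine ⟨fun i => if hi : ∃ v, emb v = i then hi.choose.1 else fun _ => false, ?_⟩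
      intro v hv
      refine ⟨emb ⟨v, hv⟩, ?_⟩
      have hi : ∃ v', emb v' = emb ⟨v, hv⟩ := ⟨_, rfl⟩
      simp only [dif_pos hi]
      rw [hemb hi.choose_spec]
    obtain ⟨g, hg⟩ := hcov
    refine ⟨fun i t => if ht : t < n then g i ⟨t, ht⟩ else false, hμ.trans ?_⟩
    gcongr
    intro Z hZ
    obtain ⟨i, hi⟩ := hg _ hZ
    refine ⟨i, fun t ht => ?_⟩
    simp [show t < n by omega, hi, rst]
  choose f hf using hf
  obtain ⟨g, -, hg⟩ := isCompact_univ.ultrafilter_le_nhds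
    ((Filter.hyperfilter ℕ).map f) (by simp)
  have hg' : Tendsto f (Filter.hyperfilter ℕ : Filter ℕ) (nhds g) := hg
  let F : ℕ → Set Cantor := fun m => {Z | ∃ i, ∀ t < m, Z t = g i t}
  have hF : ∀ m, 1 ≤ μ (F m) + ε := by
    intro m
    have hag : ∀ᶠ k in (Filter.hyperfilter ℕ : Filter ℕ), ∀ i : Fin N, ∀ t : Fin m,
        f k i t.1 = g i t.1 := by
      rw [Filter.eventually_all]
      intro i
      rw [Filter.eventually_all]
      intro t
      have := (tendsto_pi_nhds.1 ((tendsto_pi_nhds.1 hg') i)) t.1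
      rw [nhds_discrete] at this
      exact tendsto_pure.1 this
    have hge : ∀ᶠ k in (Filter.hyperfilter ℕ : Filter ℕ), m ≤ k :=
      (Nat.hyperfilter_le_atTop) (eventually_ge_atTop m)
    obtain ⟨k, hk1, hk2⟩ := (hag.and hge).exists
    refine (hf k).trans ?_
    gcongr
    rintro Z ⟨i, hi⟩
    exact ⟨i, fun t ht => (hi t (by omega)).trans (hk1 i ⟨t, ht⟩)⟩
  have hFm : ∀ m, MeasurableSet (F m) := by
    intro m
    have : F m = ⋃ i, ⋂ t : Fin m, {Z : Cantor | Z t.1 = g i t.1} := by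
      ext Z
      simp [F, Fin.forall_iff]
    rw [this]
    refine MeasurableSet.iUnion fun i => MeasurableSet.iInter fun t => ?_
    exact measurableSet_eq_fun (measurable_pi_apply _) measurable_const
  have hanti : Antitone F := by
    rintro m m' hm Z ⟨i, hi⟩
    exact ⟨i, fun t ht => hi t (by omega)⟩
  have hint : ⋂ m, F m ⊆ Set.range g := by
    intro Z hZ
    by_contra hne
    have : ∀ i, ∃ t, Z t ≠ g i t := by
      intro i
      by_contra hh
      push Not at hh
      exact hne ⟨i, (funext hh).symm⟩
    choose t ht using this
    obtain ⟨i, hi⟩ := Set.mem_iInter.1 hZ (Finset.univ.sup t + 1)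
    exact ht i (hi _ (Nat.lt_succ_of_le (Finset.le_sup (f := t) (Finset.mem_univ i))))
  have hr : 1 ≤ μ (Set.range g) + ε := by
    refine le_trans ?_ (add_le_add_left (measure_mono hint) ε)
    rw [hanti.measure_iInter (fun m => (hFm m).nullMeasurableSet) ⟨0, measure_ne_top μ _⟩,
      ENNReal.iInf_add]
    exact le_iInf hF
  refine hr.trans ?_
  have hz : μ (Set.range g \ {Z : Cantor | 0 < μ {Z}}) = 0 := by
    have hc : (Set.range g \ {Z : Cantor | 0 < μ {Z}}).Countable :=
      ((Set.finite_range g).subset Set.sdiff_subset).countable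
    refine (measure_null_iff_singleton hc).2 fun Z hZ => ?_
    have := hZ.2
    simpa using this
  gcongr ?_ + _
  calc μ (Set.range g) ≤ μ ({Z : Cantor | 0 < μ {Z}} ∪
        (Set.range g \ {Z : Cantor | 0 < μ {Z}})) := measure_mono (by simp)
    _ ≤ _ := (measure_union_le _ _).trans (by rw [hz, add_zero])

/-- if there are `p` and infinitely many `n` with
`K(μ↾n) ≤ K(n) + p`, then `μ` is supported on its set of atoms. In
particular every K-trivial measure is supported on its atoms. -/
theorem low_K_growth_implies_atomic
    (UK : BStr →. BStr) (hUK : UniversalPrefixFree UK)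
    (hlen : ∀ x : BStr, cpxN UK x.length ≤ cpx UK x)
    (μ : Measure Cantor) [IsProbabilityMeasure μ]
    (hp : ∃ p : ℕ, ∀ m : ℕ, ∃ n ≥ m, avgCpx UK μ n ≤ (cpxN UK n : ℝ) + (p : ℝ)) :
    μ {Z : Cantor | 0 < μ {Z}} = 1 := by
  obtain ⟨p, hp⟩ := hp
  have key : ∀ b : ℕ, 1 ≤ μ {Z : Cantor | 0 < μ {Z}} + ENNReal.ofReal (p / (b + 1 : ℝ)) := by
    intro b
    obtain ⟨N, hN⟩ := counting hUK hlen b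
    refine atoms_of_small μ N _ fun m => ?_
    obtain ⟨n, hn, h⟩ := hp m
    exact ⟨n, hn, _, hN n, markov_step hlen μ b h⟩
  refine le_antisymm prob_le_one ?_
  have hlim : Tendsto (fun b : ℕ => μ {Z : Cantor | 0 < μ {Z}} +
      ENNReal.ofReal (p / (b + 1 : ℝ))) atTop (nhds (μ {Z : Cantor | 0 < μ {Z}} + 0)) := by
    refine Tendsto.const_add _ ?_
    rw [← ENNReal.ofReal_zero]
    refine ENNReal.tendsto_ofReal ?_
    have := (tendsto_one_div_add_atTop_nhds_zero_nat (𝕜 := ℝ)).const_mul (p : ℝ)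
    rw [mul_zero] at this
    refine this.congr fun b => ?_
    rw [mul_one_div]
  rw [add_zero] at hlim
  exact ge_of_tendsto' hlim key
end
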